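/- arXiv:1403.0418 — 2 statements merged into one kernel-verified Lean document; each statement's English description precedes it below -/
import Mathlib

section
/- Let 0 ≤ c ≤ 1, and set s₁ = √((1 − 3c² + √(1+3c²))/18) and s₃ = (2 − √(1+3c²))/3 (the semiaxes of the largest-volume separable oblate spheroid with centre (0,0,c), minor axis radial). Then both ρ̃((0,0,c),(s₁,s₁,s₃)) and ρ̃((0,0,c),(s₁,s₁,−s₃)) are positive semidefinite, and s₁²·s₃ = (1/54)(1 − 9c² + (1 + 3c²)^{3/2}), i.e. the spheroid's volume (4π/3)s₁²s₃ equals the separable volume bound (2π/81)(1 − 9c² + (1+3c²)^{3/2}). -/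
open Matrix Kronecker Polynomial
open scoped ComplexOrder

noncomputable section

/-- The Pauli matrices: `pauli 0 = I₂`, `pauli 1 = σ₁`, `pauli 2 = σ₂`, `pauli 3 = σ₃`. -/
def pauli : Fin 4 → Matrix (Fin 2) (Fin 2) ℂ
  | 0 => !![1, 0; 0, 1]
  | 1 => !![0, 1; 1, 0]
  | 2 => !![0, -Complex.I; Complex.I, 0]
  | 3 => !![1, 0; 0, -1]

/-- Euclidean norm of a vector in ℝ³. -/
def norm3 (v : Fin 3 → ℝ) : ℝ := Real.sqrt (∑ i, v i ^ 2)

/-- The canonical axis-aligned two-qubit operator with steering-ellipsoid centre `c`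
and signed semiaxes `t`:
`ρ̃(c,t) = (1/4)(I₄ + Σᵢ cᵢ (σᵢ⊗σ₀) + Σᵢ tᵢ (σᵢ⊗σᵢ))`. -/
def rhoTilde (c t : Fin 3 → ℝ) : Matrix (Fin 2 × Fin 2) (Fin 2 × Fin 2) ℂ :=
  (1 / 4 : ℂ) • ((1 : Matrix (Fin 2 × Fin 2) (Fin 2 × Fin 2) ℂ)
    + ∑ i : Fin 3, (c i : ℂ) • (pauli i.succ ⊗ₖ pauli 0)
    + ∑ i : Fin 3, (t i : ℂ) • (pauli i.succ ⊗ₖ pauli i.succ))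

/-!
In the parity-ordered basis `|00⟩, |11⟩, |01⟩, |10⟩` the operator `ρ̃((0,0,c),(a,b,t))` is block
diagonal, and up to the factor `1/4` its blocks are the single-qubit operators with
`(trace / 2, Bloch vector)` equal to `(1 + t, (a - b, 0, c))` and `(1 - t, (a + b, 0, c))`. Hence it
is positive semidefinite iff each Bloch vector is no longer than the corresponding half-trace.

Reversing the sign of `t` is, up to a local rotation, partial transposition, so positivity for both
signs is the PPT criterion. For `a = b = s` it amounts to `√((2s)² + c²) ≤ 1 - |t|`. The spheroid of
the theorem attains equality: with `r = √(1 + 3c²)` one has `18 s₁² = (2 - r)(1 + r)` and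
`3 (1 - s₃) = 1 + r`.
-/

section PosSemidef

lemma posSemidef_fin_two_iff {𝕜 : Type*} [RCLike 𝕜] {A : Matrix (Fin 2) (Fin 2) 𝕜}
    (hA : A.IsHermitian) :
    A.PosSemidef ↔ 0 ≤ A.trace ∧ 0 ≤ A.det := by
  have trace_nonneg_iff : 0 ≤ A.trace ↔ 0 ≤ hA.eigenvalues 0 + hA.eigenvalues 1 := by
    rw [hA.trace_eq_sum_eigenvalues, Fin.sum_univ_two]
    exact_mod_cast Iff.rfl
  have det_nonneg_iff : 0 ≤ A.det ↔ 0 ≤ hA.eigenvalues 0 * hA.eigenvalues 1 := by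
    rw [hA.det_eq_prod_eigenvalues, Fin.prod_univ_two]
    exact_mod_cast Iff.rfl
  rw [hA.posSemidef_iff_eigenvalues_nonneg, trace_nonneg_iff, det_nonneg_iff, Pi.le_def,
    Fin.forall_fin_two]
  simp only [Pi.zero_apply]
  constructor
  · rintro ⟨h₀, h₁⟩
    exact ⟨add_nonneg h₀ h₁, mul_nonneg h₀ h₁⟩
  · rintro ⟨hadd, hmul⟩
    rcases mul_nonneg_iff.1 hmul with h | ⟨h₀, h₁⟩
    · exact h
    · constructor <;> linarith

variable {m n R : Type*} [Ring R] [PartialOrder R] [StarRing R]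

lemma posSemidef_smul_iff {α : Type*} [Semifield α] [LinearOrder α] [IsStrictOrderedRing α]
    [StarRing α] [StarOrderedRing α] [Algebra α R] [StarModule α R] [PosSMulMono α R]
    {A : Matrix n n R} {a : α} (ha : 0 < a) :
    (a • A).PosSemidef ↔ A.PosSemidef :=
  ⟨fun h ↦ by simpa [smul_smul, ha.ne'] using h.smul (inv_nonneg.2 ha.le), fun h ↦ h.smul ha.le⟩

lemma posSemidef_fromBlocks_zero_iff [AddLeftMono R] {A : Matrix m m R} {D : Matrix n n R} :
    (fromBlocks A 0 0 D).PosSemidef ↔ A.PosSemidef ∧ D.PosSemidef := by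
  constructor
  · exact fun h ↦ ⟨h.submatrix Sum.inl, h.submatrix Sum.inr⟩
  · rintro ⟨hA, hD⟩
    refine ⟨hA.isHermitian.fromBlocks conjTranspose_zero hD.isHermitian, fun x ↦ ?_⟩
    obtain ⟨⟨u, v⟩, rfl⟩ := Finsupp.sumFinsuppEquivProdFinsupp.symm.surjective x
    simpa [Finsupp.sum_sumElim, Function.comp_def] using add_nonneg (hA.2 u) (hD.2 v)

end PosSemidef

/-- The single-qubit operator `m I + v · σ` with half-trace `m` and (unnormalized) Bloch vector
`v`. -/
def blochMatrix (m : ℝ) (v : Fin 3 → ℝ) : Matrix (Fin 2) (Fin 2) ℂ :=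
  (m : ℂ) • pauli 0 + ∑ i : Fin 3, (v i : ℂ) • pauli i.succ

lemma blochMatrix_eq (m : ℝ) (v : Fin 3 → ℝ) :
    blochMatrix m v =
      !![(m : ℂ) + v 2, v 0 - v 1 * Complex.I; v 0 + v 1 * Complex.I, (m : ℂ) - v 2] := by
  ext i j
  fin_cases i <;> fin_cases j <;>
    simp [blochMatrix, pauli, Fin.sum_univ_three, Fin.succ, sub_eq_add_neg]

lemma isHermitian_blochMatrix (m : ℝ) (v : Fin 3 → ℝ) : (blochMatrix m v).IsHermitian := by
  rw [blochMatrix_eq]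
  ext i j
  fin_cases i <;> fin_cases j <;> simp [sub_eq_add_neg]

lemma trace_blochMatrix (m : ℝ) (v : Fin 3 → ℝ) : (blochMatrix m v).trace = (2 * m : ℝ) := by
  rw [blochMatrix_eq, trace_fin_two_of]
  push_cast
  ring

lemma det_blochMatrix (m : ℝ) (v : Fin 3 → ℝ) :
    (blochMatrix m v).det = (m ^ 2 - ∑ i, v i ^ 2 : ℝ) := by
  rw [blochMatrix_eq, det_fin_two_of, Fin.sum_univ_three]
  push_cast
  linear_combination (v 1 : ℂ) ^ 2 * Complex.I_sq

theorem posSemidef_blochMatrix_iff {m : ℝ} {v : Fin 3 → ℝ} :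
    (blochMatrix m v).PosSemidef ↔ norm3 v ≤ m := by
  rw [posSemidef_fin_two_iff (isHermitian_blochMatrix m v), trace_blochMatrix, det_blochMatrix,
    Complex.zero_le_real, Complex.zero_le_real, norm3, Real.sqrt_le_iff, sub_nonneg,
    mul_nonneg_iff_of_pos_left two_pos]

/-- Splits the two-qubit basis by parity: the even vectors `|00⟩, |11⟩` come first, then the odd
vectors `|01⟩, |10⟩`; the block index is the first qubit. -/
def parityEquiv : Fin 2 ⊕ Fin 2 ≃ Fin 2 × Fin 2 where
  toFun := Sum.elim (fun i ↦ (i, i)) (fun i ↦ (i, i.rev))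
  invFun p := if p.1 = p.2 then .inl p.1 else .inr p.1
  left_inv := by decide
  right_inv := by decide

section RhoTilde

variable {a b c s t : ℝ}

lemma rhoTilde_submatrix_parityEquiv (a b c t : ℝ) :
    (rhoTilde ![0, 0, c] ![a, b, t]).submatrix parityEquiv parityEquiv =
      (1 / 4 : ℝ) • fromBlocks (blochMatrix (1 + t) ![a - b, 0, c]) 0 0
        (blochMatrix (1 - t) ![a + b, 0, c]) := by
  rw [blochMatrix_eq, blochMatrix_eq]
  ext i j
  rcases i with i | i <;> rcases j with j | j <;> fin_cases i <;> fin_cases j <;>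
    simp [rhoTilde, parityEquiv, pauli, Fin.sum_univ_three, Fin.succ, one_apply] <;> ring

theorem posSemidef_rhoTilde_iff :
    (rhoTilde ![0, 0, c] ![a, b, t]).PosSemidef ↔
      √((a - b) ^ 2 + c ^ 2) ≤ 1 + t ∧ √((a + b) ^ 2 + c ^ 2) ≤ 1 - t := by
  rw [← posSemidef_submatrix_equiv parityEquiv, rhoTilde_submatrix_parityEquiv,
    posSemidef_smul_iff (by norm_num), posSemidef_fromBlocks_zero_iff,
    posSemidef_blochMatrix_iff, posSemidef_blochMatrix_iff]
  simp [norm3, Fin.sum_univ_three]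

theorem posSemidef_rhoTilde_and_neg_iff :
    (rhoTilde ![0, 0, c] ![s, s, t]).PosSemidef ∧ (rhoTilde ![0, 0, c] ![s, s, -t]).PosSemidef ↔
      √((2 * s) ^ 2 + c ^ 2) ≤ 1 - |t| := by
  have hle : √((s - s) ^ 2 + c ^ 2) ≤ √((2 * s) ^ 2 + c ^ 2) :=
    Real.sqrt_le_sqrt (by nlinarith only [sq_nonneg s])
  rw [posSemidef_rhoTilde_iff, posSemidef_rhoTilde_iff, ← two_mul, le_sub_comm (c := |t|), abs_le]
  constructor
  · rintro ⟨⟨-, h⟩, -, h'⟩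
    constructor <;> linarith
  · rintro ⟨h, h'⟩
    refine ⟨⟨?_, ?_⟩, ?_, ?_⟩ <;> linarith

end RhoTilde

/-- The semiaxis `s₁` of the largest-volume separable oblate spheroid centred at `(0,0,c)`, in the
directions orthogonal to the centre. -/
def equatorialSemiaxis (c : ℝ) : ℝ := √((1 - 3 * c ^ 2 + √(1 + 3 * c ^ 2)) / 18)

/-- The minor semiaxis `s₃` of the largest-volume separable oblate spheroid centred at `(0,0,c)`,
in the direction of the centre. -/
def radialSemiaxis (c : ℝ) : ℝ := (2 - √(1 + 3 * c ^ 2)) / 3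

section Spheroid

variable {c : ℝ}

lemma sq_sqrt_one_add_three_mul_sq (c : ℝ) : √(1 + 3 * c ^ 2) ^ 2 = 1 + 3 * c ^ 2 :=
  Real.sq_sqrt (by positivity)

lemma sqrt_one_add_three_mul_sq_le_two (hc : |c| ≤ 1) : √(1 + 3 * c ^ 2) ≤ 2 :=
  Real.sqrt_le_iff.2 ⟨zero_le_two, by linarith [(sq_le_one_iff_abs_le_one c).2 hc]⟩

lemma radialSemiaxis_nonneg (hc : |c| ≤ 1) : 0 ≤ radialSemiaxis c :=
  div_nonneg (sub_nonneg.2 (sqrt_one_add_three_mul_sq_le_two hc)) zero_le_three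

lemma sq_equatorialSemiaxis (hc : |c| ≤ 1) :
    equatorialSemiaxis c ^ 2 = (2 - √(1 + 3 * c ^ 2)) * (1 + √(1 + 3 * c ^ 2)) / 18 := by
  have hfactor : 1 - 3 * c ^ 2 + √(1 + 3 * c ^ 2) =
      (2 - √(1 + 3 * c ^ 2)) * (1 + √(1 + 3 * c ^ 2)) := by
    linear_combination sq_sqrt_one_add_three_mul_sq c
  have hnonneg : 0 ≤ 2 - √(1 + 3 * c ^ 2) :=
    sub_nonneg.2 (sqrt_one_add_three_mul_sq_le_two hc)
  rw [equatorialSemiaxis, hfactor, Real.sq_sqrt (by positivity)]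

lemma sqrt_two_mul_equatorialSemiaxis_sq_add_sq (hc : |c| ≤ 1) :
    √((2 * equatorialSemiaxis c) ^ 2 + c ^ 2) = 1 - |radialSemiaxis c| := by
  have hradial : 1 - radialSemiaxis c = (1 + √(1 + 3 * c ^ 2)) / 3 := by
    rw [radialSemiaxis]
    ring
  have hsq : (2 * equatorialSemiaxis c) ^ 2 + c ^ 2 = ((1 + √(1 + 3 * c ^ 2)) / 3) ^ 2 := by
    linear_combination 4 * sq_equatorialSemiaxis hc - sq_sqrt_one_add_three_mul_sq c / 3
  rw [abs_of_nonneg (radialSemiaxis_nonneg hc), hradial, hsq, Real.sqrt_sq (by positivity)]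

lemma sq_equatorialSemiaxis_mul_radialSemiaxis (hc : |c| ≤ 1) :
    equatorialSemiaxis c ^ 2 * radialSemiaxis c =
      (1 / 54) * (1 - 9 * c ^ 2 + (1 + 3 * c ^ 2) * √(1 + 3 * c ^ 2)) := by
  rw [sq_equatorialSemiaxis hc, radialSemiaxis]
  linear_combination (√(1 + 3 * c ^ 2) - 3) / 54 * sq_sqrt_one_add_three_mul_sq c

end Spheroid

theorem stmt9_general {c : ℝ} (hc : |c| ≤ 1) :
    (rhoTilde ![0, 0, c]
        ![equatorialSemiaxis c, equatorialSemiaxis c, radialSemiaxis c]).PosSemidef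
    ∧ (rhoTilde ![0, 0, c]
        ![equatorialSemiaxis c, equatorialSemiaxis c, -radialSemiaxis c]).PosSemidef
    ∧ equatorialSemiaxis c ^ 2 * radialSemiaxis c =
      (1 / 54) * (1 - 9 * c ^ 2 + (1 + 3 * c ^ 2) * √(1 + 3 * c ^ 2)) := by
  obtain ⟨hpos, hneg⟩ :=
    posSemidef_rhoTilde_and_neg_iff.2 (sqrt_two_mul_equatorialSemiaxis_sq_add_sq hc).le
  exact ⟨hpos, hneg, sq_equatorialSemiaxis_mul_radialSemiaxis hc⟩

/-- The largest-volume separable oblate spheroid with centre `(0,0,c)`: with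
`s₁ = √((1 − 3c² + √(1+3c²))/18)` and `s₃ = (2 − √(1+3c²))/3`, both chiralities are
physical states and `s₁²s₃ = (1/54)(1 − 9c² + (1 + 3c²)^{3/2})`, so the spheroid's
volume `(4π/3)s₁²s₃` equals the separable volume bound. -/
theorem stmt9 (c : ℝ) (hc0 : 0 ≤ c) (hc1 : c ≤ 1) :
    (rhoTilde ![0, 0, c]
        ![Real.sqrt ((1 - 3 * c ^ 2 + Real.sqrt (1 + 3 * c ^ 2)) / 18),
          Real.sqrt ((1 - 3 * c ^ 2 + Real.sqrt (1 + 3 * c ^ 2)) / 18),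
          (2 - Real.sqrt (1 + 3 * c ^ 2)) / 3]).PosSemidef
    ∧ (rhoTilde ![0, 0, c]
        ![Real.sqrt ((1 - 3 * c ^ 2 + Real.sqrt (1 + 3 * c ^ 2)) / 18),
          Real.sqrt ((1 - 3 * c ^ 2 + Real.sqrt (1 + 3 * c ^ 2)) / 18),
          -((2 - Real.sqrt (1 + 3 * c ^ 2)) / 3)]).PosSemidef
    ∧ Real.sqrt ((1 - 3 * c ^ 2 + Real.sqrt (1 + 3 * c ^ 2)) / 18) ^ 2
        * ((2 - Real.sqrt (1 + 3 * c ^ 2)) / 3)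
      = (1 / 54) * (1 - 9 * c ^ 2
          + (1 + 3 * c ^ 2) * Real.sqrt (1 + 3 * c ^ 2)) :=
  stmt9_general (abs_le.2 ⟨by linarith, hc1⟩)
end
end

section
/- Let ρ be a two-qubit state (4×4 positive semidefinite complex matrix of unit trace), and let λ₁ ≥ λ₂ ≥ λ₃ ≥ λ₄ ≥ 0 be nonnegative reals such that the characteristic polynomial of ρ·ρ̂ equals ∏ᵢ (X − λᵢ²). Then λ₁ − λ₂ − λ₃ − λ₄ ≤ |det Θ(ρ)|^{1/4}; that is, the concurrence is bounded by the obesity: C(ρ) ≤ Ω(ρ) = |det Θ(ρ)|^{1/4}, equivalently C(ρ) ≤ γ_b^{−1}(3V_A/(4π))^{1/4} when ‖b‖ < 1. -/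
open Matrix Kronecker Polynomial
open scoped ComplexOrder

noncomputable section

/-- The Pauli-basis expansion matrix `Θ(ρ)_{μν} = Re tr(ρ (σ_μ ⊗ σ_ν))`. -/
def Theta (ρ : Matrix (Fin 2 × Fin 2) (Fin 2 × Fin 2) ℂ) : Matrix (Fin 4) (Fin 4) ℝ :=
  Matrix.of fun μ ν => ((ρ * (pauli μ ⊗ₖ pauli ν)).trace).re

/-- The spin-flipped matrix `ρ̂ = (σ₂⊗σ₂)·conj(ρ)·(σ₂⊗σ₂)`. -/
def spinFlip (ρ : Matrix (Fin 2 × Fin 2) (Fin 2 × Fin 2) ℂ) :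
    Matrix (Fin 2 × Fin 2) (Fin 2 × Fin 2) ℂ :=
  (pauli 2 ⊗ₖ pauli 2) * ρ.map (starRingEnd ℂ) * (pauli 2 ⊗ₖ pauli 2)

/-!
For Hermitian `ρ` write `M = ρρ̂`. Realignment turns `tr (ρ (A ⊗ B))` into a bilinear form in `A`
and `B`, so `det Θ(ρ)` is a constant times the determinant of the realignment of `ρ`, and a quartic
polynomial identity gives `det Θ(ρ) = (tr M)² - 2 tr M² - 8 det ρ`. Since `(det ρ)² = det M`, we
have `det ρ = λ₁λ₂λ₃d` with `d = ±λ₄`, and the right-hand side factors as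
`-(λ₁ + λ₂ + λ₃ + d)(λ₁ + λ₂ - λ₃ - d)(λ₁ - λ₂ + λ₃ - d)(λ₁ - λ₂ - λ₃ + d)`. When
`λ₁ - λ₂ - λ₃ - λ₄` is nonnegative, it is at most each of these four factors.
-/

section Charpoly

variable {R n ι : Type*} [CommRing R] [Fintype n] [DecidableEq n]

lemma charpoly_neg_eq (M : Matrix n n R) :
    (-M).charpoly = (-1) ^ Fintype.card n * M.charpoly.comp (-X) := by
  have hmap : M.charmatrix.map (compRingHom (-X)) = -(-M).charmatrix := by
    ext1 i j
    by_cases hij : i = j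
    · subst hij
      simp only [coe_compRingHom, map_apply, charmatrix_apply_eq, sub_comp, X_comp, C_comp,
        Matrix.neg_apply, map_neg]
      ring
    · simp [charmatrix_apply_ne, hij]
  have hcomp : M.charpoly.comp (-X) = (-1) ^ Fintype.card n * (-M).charpoly := by
    rw [charpoly, charpoly, ← coe_compRingHom_apply, RingHom.map_det, RingHom.mapMatrix_apply,
      hmap, det_neg]
  rw [hcomp, ← mul_assoc, ← mul_pow, neg_one_mul, neg_neg, one_pow, one_mul]

lemma expand_charpoly_mul_self (M : Matrix n n R) :
    expand R 2 (M * M).charpoly = M.charpoly * (-M).charpoly := by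
  have hX : (expand R 2).mapMatrix (scalar n (X : R[X])) = scalar n X * scalar n X := by
    rw [← map_mul, ← sq]
    simp [scalar_apply, diagonal_map]
  have hC (N : Matrix n n R) : (expand R 2).mapMatrix (C.mapMatrix N) = C.mapMatrix N := by
    ext1 i j
    simp
  have hcomm : Commute (scalar n (X : R[X])) (C.mapMatrix M) := scalar_commute X (Commute.all X) _
  have hmap : (expand R 2).mapMatrix (M * M).charmatrix = M.charmatrix * (-M).charmatrix := by
    simp only [charmatrix, map_sub, hX, hC, map_mul, map_neg, sub_neg_eq_add]
    exact hcomm.mul_self_sub_mul_self_eq'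
  rw [charpoly, charpoly, charpoly, ← det_mul, ← hmap, AlgHom.map_det]

variable [Fintype ι] {M : Matrix n n R} {μ : ι → R}

lemma charpoly_mul_self_of_eq_prod (hM : M.charpoly = ∏ i, (X - C (μ i))) :
    (M * M).charpoly = ∏ i, (X - C (μ i ^ 2)) := by
  nontriviality R
  have hcard : Fintype.card n = Fintype.card ι := by
    rw [← charpoly_natDegree_eq_dim M, hM, natDegree_finsetProd_X_sub_C_eq_card, Finset.card_univ]
  apply expand_injective two_pos
  rw [expand_charpoly_mul_self, charpoly_neg_eq, hM, hcard, ← Finset.card_univ,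
    ← Finset.prod_const, prod_comp, ← Finset.prod_mul_distrib, ← Finset.prod_mul_distrib, map_prod]
  refine Finset.prod_congr rfl fun i _ => ?_
  simp only [sub_comp, X_comp, C_comp, map_pow, map_sub, expand_X, expand_C]
  ring

variable [IsDomain R]

lemma roots_charpoly_of_eq_prod (hM : M.charpoly = ∏ i, (X - C (μ i))) :
    M.charpoly.roots = Finset.univ.val.map μ := by
  rw [hM, ← roots_multiset_prod_X_sub_C (Finset.univ.val.map μ), Multiset.map_map]
  rfl

lemma trace_eq_sum_of_charpoly_eq_prod (hM : M.charpoly = ∏ i, (X - C (μ i))) :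
    M.trace = ∑ i, μ i := by
  have hsplits : M.charpoly.Splits := hM ▸ Splits.prod fun i _ => Splits.X_sub_C (μ i)
  rw [trace_eq_sum_roots_charpoly_of_splits hsplits, roots_charpoly_of_eq_prod hM,
    Finset.sum_map_val]

lemma det_eq_prod_of_charpoly_eq_prod (hM : M.charpoly = ∏ i, (X - C (μ i))) :
    M.det = ∏ i, μ i := by
  have hsplits : M.charpoly.Splits := hM ▸ Splits.prod fun i _ => Splits.X_sub_C (μ i)
  rw [det_eq_prod_roots_charpoly_of_splits hsplits, roots_charpoly_of_eq_prod hM,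
    Finset.prod_map_val]

end Charpoly

section Determinant

variable {R m n : Type*} [CommRing R] [Fintype m] [DecidableEq m] [Fintype n] [DecidableEq n]

lemma det_mul_comm_of_card_eq (h : Fintype.card m = Fintype.card n) (A : Matrix m n R)
    (B : Matrix n m R) : (A * B).det = (B * A).det := by
  let e : m ≃ n := Fintype.equivOfCardEq h
  rw [← det_submatrix_equiv_self e (B * A), ← submatrix_mul_equiv B A e (Equiv.refl m) e,
    det_mul_comm, submatrix_mul_equiv, Equiv.coe_refl, submatrix_id_id]

lemma det_fin_four (A : Matrix (Fin 4) (Fin 4) R) :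
    A.det =
      A 0 0 * (A 1 1 * (A 2 2 * A 3 3 - A 2 3 * A 3 2) - A 1 2 * (A 2 1 * A 3 3 - A 2 3 * A 3 1)
        + A 1 3 * (A 2 1 * A 3 2 - A 2 2 * A 3 1))
      - A 0 1 * (A 1 0 * (A 2 2 * A 3 3 - A 2 3 * A 3 2) - A 1 2 * (A 2 0 * A 3 3 - A 2 3 * A 3 0)
        + A 1 3 * (A 2 0 * A 3 2 - A 2 2 * A 3 0))
      + A 0 2 * (A 1 0 * (A 2 1 * A 3 3 - A 2 3 * A 3 1) - A 1 1 * (A 2 0 * A 3 3 - A 2 3 * A 3 0)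
        + A 1 3 * (A 2 0 * A 3 1 - A 2 1 * A 3 0))
      - A 0 3 * (A 1 0 * (A 2 1 * A 3 2 - A 2 2 * A 3 1) - A 1 1 * (A 2 0 * A 3 2 - A 2 2 * A 3 0)
        + A 1 2 * (A 2 0 * A 3 1 - A 2 1 * A 3 0)) := by
  simp only [det_succ_row_zero A, Fin.sum_univ_four, det_fin_three, submatrix_apply, Fin.succAbove,
    Fin.reduceSucc, Fin.reduceCastSucc, Fin.reduceLT, Fin.isValue, Fin.succ_zero_eq_one,
    Fin.succ_one_eq_two, Fin.castSucc_zero, Fin.castSucc_one, Fin.coe_ofNat_eq_mod,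
    lt_self_iff_false, Fin.not_lt_zero, zero_lt_one, Fin.lt_one_iff, Fin.reduceEq, if_true,
    if_false]
  ring

lemma det_fin_two_prod_fin_two (A : Matrix (Fin 2 × Fin 2) (Fin 2 × Fin 2) R) :
    A.det = (!![A (0, 0) (0, 0), A (0, 0) (0, 1), A (0, 0) (1, 0), A (0, 0) (1, 1);
                A (0, 1) (0, 0), A (0, 1) (0, 1), A (0, 1) (1, 0), A (0, 1) (1, 1);
                A (1, 0) (0, 0), A (1, 0) (0, 1), A (1, 0) (1, 0), A (1, 0) (1, 1);
                A (1, 1) (0, 0), A (1, 1) (0, 1), A (1, 1) (1, 0), A (1, 1) (1, 1)]).det := by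
  rw [← det_submatrix_equiv_self (finProdFinEquiv (m := 2) (n := 2)).symm]
  congr 1
  ext i j
  fin_cases i <;> fin_cases j <;> rfl

end Determinant

section Realign

variable {R m n : Type*}

/-- The realignment of an operator on a tensor product: rows and columns of the result are indexed
by the row-column pairs of the first and of the second factor, so that the realignment of `A ⊗ₖ B`
is the rank-one matrix built from the entries of `A` and of `B`. -/
def realign (A : Matrix (m × n) (m × n) R) : Matrix (m × m) (n × n) R :=
  of fun i j => A (i.1, j.1) (i.2, j.2)

lemma trace_mul_kronecker_eq_realign [CommSemiring R] [Fintype m] [Fintype n]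
    (T : Matrix (m × n) (m × n) R) (A : Matrix m m R) (B : Matrix n n R) :
    (T * (A ⊗ₖ B)).trace = vec A ⬝ᵥ realign T *ᵥ vec B := by
  simp only [Matrix.trace, diag, mul_apply, dotProduct, mulVec, realign, of_apply, vec,
    Fintype.sum_prod_type, kroneckerMap_apply, Finset.mul_sum]
  refine Finset.sum_congr rfl fun i _ => ?_
  rw [Finset.sum_comm]
  refine Finset.sum_congr rfl fun k _ => ?_
  refine Finset.sum_congr rfl fun j _ => Finset.sum_congr rfl fun l _ => ?_
  ring

end Realign

section SpinTranspose

variable (R : Type*) [CommRing R]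

/-- The alternating form on `R²` preserved by `SL₂`, i.e. `i σ₂` when `R = ℂ`. -/
def altForm : Matrix (Fin 2) (Fin 2) R := !![0, 1; -1, 0]

variable {R}

/-- The spin flip with the complex conjugate replaced by the transpose, which makes it polynomial
in the entries; the two agree on Hermitian matrices. -/
def spinTranspose (A : Matrix (Fin 2 × Fin 2) (Fin 2 × Fin 2) R) :
    Matrix (Fin 2 × Fin 2) (Fin 2 × Fin 2) R :=
  (altForm R ⊗ₖ altForm R) * Aᵀ * (altForm R ⊗ₖ altForm R)

lemma det_spinTranspose (A : Matrix (Fin 2 × Fin 2) (Fin 2 × Fin 2) R) :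
    (spinTranspose A).det = A.det := by
  simp [spinTranspose, det_kronecker, altForm]

lemma spinTranspose_apply (A : Matrix (Fin 2 × Fin 2) (Fin 2 × Fin 2) R) (a b c d : Fin 2) :
    spinTranspose A (a, b) (c, d) =
      (-1) ^ (a + b + c + d : ℕ) * A (1 - c, 1 - d) (1 - a, 1 - b) := by
  fin_cases a <;> fin_cases b <;> fin_cases c <;> fin_cases d <;>
    norm_num [spinTranspose, altForm, mul_apply, Fintype.sum_prod_type]

-- Both sides are invariant under `A ↦ (g ⊗ₖ h) * A` and `A ↦ A * (g ⊗ₖ h)` for `g`, `h` in `SL₂`.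
-- Over `ℂ` a generic orbit contains a Bell-diagonal matrix, for which the identity is the
-- factorization of `2 ∑ λᵢ⁴ - (∑ λᵢ²)² + 8 λ₁λ₂λ₃λ₄` into four linear factors.
lemma sixteen_mul_det_realign (A : Matrix (Fin 2 × Fin 2) (Fin 2 × Fin 2) R) :
    16 * (realign A).det =
      2 * ((A * spinTranspose A) * (A * spinTranspose A)).trace - (A * spinTranspose A).trace ^ 2
        + 8 * A.det := by
  simp only [det_fin_two_prod_fin_two, det_fin_four, of_apply, cons_val, realign, Matrix.trace,
    diag, mul_apply, Fintype.sum_prod_type, Fin.sum_univ_two, spinTranspose_apply]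
  simp only [Fin.isValue, Fin.coe_ofNat_eq_mod, Nat.zero_mod, Nat.mod_succ, sub_zero, sub_self]
  ring

end SpinTranspose

section Pauli

lemma isHermitian_pauli (μ : Fin 4) : (pauli μ).IsHermitian := by
  ext i j
  fin_cases μ <;> fin_cases i <;> fin_cases j <;> simp [pauli]

lemma sum_pauli_mul_pauli (i j k l : Fin 2) :
    ∑ μ, pauli μ i j * pauli μ k l = if i = l ∧ j = k then 2 else 0 := by
  fin_cases i <;> fin_cases j <;> fin_cases k <;> fin_cases l <;>
    norm_num [Fin.sum_univ_four, pauli]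

/-- The matrix whose rows are the vectorized Pauli matrices; it turns realigned operators into
their coefficient matrices in the Pauli basis. -/
def pauliVec : Matrix (Fin 4) (Fin 2 × Fin 2) ℂ := of fun μ => vec (pauli μ)

lemma transpose_pauliVec_mul_pauliVec :
    pauliVecᵀ * pauliVec = (2 : ℂ) • Equiv.Perm.permMatrix ℂ (Equiv.prodComm (Fin 2) (Fin 2)) := by
  ext ⟨i, j⟩ ⟨k, l⟩
  have h := sum_pauli_mul_pauli j i l k
  simp only [mul_apply, pauliVec, transpose_apply, of_apply, vec, h]
  simp [Equiv.Perm.permMatrix, PEquiv.toMatrix_apply, and_comm]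

lemma det_transpose_pauliVec_mul_pauliVec : (pauliVecᵀ * pauliVec).det = -16 := by
  have hsign : Equiv.Perm.sign (Equiv.prodComm (Fin 2) (Fin 2)) = -1 := by decide
  rw [transpose_pauliVec_mul_pauliVec, det_smul, det_permutation, hsign]
  norm_num

lemma pauliVec_mul_realign_mul_transpose_apply (T : Matrix (Fin 2 × Fin 2) (Fin 2 × Fin 2) ℂ)
    (μ ν : Fin 4) :
    (pauliVec * realign T * pauliVecᵀ) μ ν = (T * (pauli μ ⊗ₖ pauli ν)).trace := by
  rw [trace_mul_kronecker_eq_realign, dotProduct_mulVec]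
  rfl

lemma det_pauliVec_mul_realign_mul_transpose (T : Matrix (Fin 2 × Fin 2) (Fin 2 × Fin 2) ℂ) :
    (pauliVec * realign T * pauliVecᵀ).det = -16 * (realign T).det := by
  rw [Matrix.mul_assoc, det_mul_comm_of_card_eq (by simp), Matrix.mul_assoc, det_mul,
    det_transpose_pauliVec_mul_pauliVec, mul_comm]

end Pauli

section Hermitian

variable {n : Type*} [Fintype n]

lemma ofReal_re_trace_mul {A B : Matrix n n ℂ} (hA : A.IsHermitian)
    (hB : B.IsHermitian) : ((A * B).trace.re : ℂ) = (A * B).trace := by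
  rw [← Complex.conj_eq_iff_re, ← Complex.star_def, ← trace_conjTranspose, conjTranspose_mul,
    hA.eq, hB.eq, trace_mul_comm]

lemma ofReal_re_det [DecidableEq n] {A : Matrix n n ℂ} (hA : A.IsHermitian) :
    (A.det.re : ℂ) = A.det := by
  rw [← Complex.conj_eq_iff_re, ← Complex.star_def, ← det_conjTranspose, hA.eq]

variable {ρ : Matrix (Fin 2 × Fin 2) (Fin 2 × Fin 2) ℂ}

lemma map_ofReal_Theta (hρ : ρ.IsHermitian) :
    (Theta ρ).map Complex.ofRealHom = pauliVec * realign ρ * pauliVecᵀ := by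
  ext μ ν
  have hσ : (pauli μ ⊗ₖ pauli ν).IsHermitian := by
    rw [IsHermitian, conjTranspose_kronecker, isHermitian_pauli, isHermitian_pauli]
  rw [pauliVec_mul_realign_mul_transpose_apply, ← ofReal_re_trace_mul hρ hσ]
  rfl

lemma spinFlip_eq_spinTranspose (hρ : ρ.IsHermitian) : spinFlip ρ = spinTranspose ρ := by
  have hconj : ρ.map (starRingEnd ℂ) = ρᵀ := congr_arg transpose hρ.eq
  have hσ : pauli 2 = (-Complex.I) • altForm ℂ := by
    ext i j
    fin_cases i <;> fin_cases j <;> simp [pauli, altForm]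
  have hσσ : pauli 2 ⊗ₖ pauli 2 = -(altForm ℂ ⊗ₖ altForm ℂ) := by
    rw [hσ, smul_kronecker, kronecker_smul, smul_smul, neg_mul_neg, Complex.I_mul_I, neg_one_smul]
  simp only [spinFlip, spinTranspose, hconj, hσσ, neg_mul, mul_neg, neg_neg]

lemma det_Theta_eq_trace (hρ : ρ.IsHermitian) :
    ((Theta ρ).det : ℂ) =
      (ρ * spinFlip ρ).trace ^ 2 - 2 * ((ρ * spinFlip ρ) * (ρ * spinFlip ρ)).trace
        - 8 * ρ.det := by
  have hdet : ((Theta ρ).det : ℂ) = -16 * (realign ρ).det := by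
    rw [← det_pauliVec_mul_realign_mul_transpose, ← map_ofReal_Theta hρ]
    exact RingHom.map_det Complex.ofRealHom (Theta ρ)
  rw [hdet, neg_mul, sixteen_mul_det_realign, spinFlip_eq_spinTranspose hρ]
  ring

lemma det_mul_spinFlip (hρ : ρ.IsHermitian) : (ρ * spinFlip ρ).det = ρ.det ^ 2 := by
  rw [det_mul, spinFlip_eq_spinTranspose hρ, det_spinTranspose, sq]

variable {lam : Fin 4 → ℝ}

lemma exists_det_eq_mul (hρ : ρ.IsHermitian)
    (hchar : (ρ * spinFlip ρ).charpoly = ∏ i : Fin 4, (X - C ((lam i : ℂ) ^ 2))) :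
    ∃ d : ℝ, |d| = |lam 3| ∧ ρ.det = ((lam 0 * lam 1 * lam 2 * d : ℝ) : ℂ) := by
  have hsq : ρ.det.re ^ 2 = (lam 0 * lam 1 * lam 2 * lam 3) ^ 2 := by
    have h := det_mul_spinFlip hρ
    rw [det_eq_prod_of_charpoly_eq_prod hchar, Fin.prod_univ_four, ← ofReal_re_det hρ] at h
    norm_cast at h
    rw [← h]
    ring
  rw [← ofReal_re_det hρ]
  rcases sq_eq_sq_iff_eq_or_eq_neg.1 hsq with h | h
  · exact ⟨lam 3, rfl, congr_arg _ h⟩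
  · exact ⟨-lam 3, abs_neg _, congr_arg _ (h.trans (by ring))⟩

lemma exists_det_Theta_eq_mul (hρ : ρ.IsHermitian)
    (hchar : (ρ * spinFlip ρ).charpoly = ∏ i : Fin 4, (X - C ((lam i : ℂ) ^ 2))) :
    ∃ d : ℝ, |d| = |lam 3| ∧
      (Theta ρ).det =
        -((lam 0 + lam 1 + lam 2 + d) * (lam 0 + lam 1 - lam 2 - d)
          * ((lam 0 - lam 1 + lam 2 - d) * (lam 0 - lam 1 - lam 2 + d))) := by
  obtain ⟨d, hd, hdet⟩ := exists_det_eq_mul hρ hchar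
  refine ⟨d, hd, ?_⟩
  have hd2 : lam 3 ^ 2 = d ^ 2 := (sq_eq_sq_iff_abs_eq_abs _ _).2 hd.symm
  have htrace := det_Theta_eq_trace hρ
  rw [trace_eq_sum_of_charpoly_eq_prod hchar,
    trace_eq_sum_of_charpoly_eq_prod (charpoly_mul_self_of_eq_prod hchar), hdet,
    Fin.sum_univ_four, Fin.sum_univ_four] at htrace
  norm_cast at htrace
  rw [htrace, hd2]
  ring

end Hermitian

lemma pow_four_le_mul_mul {a b c d : ℝ} (hb : 0 ≤ b) (hc : 0 ≤ c) (h : 0 ≤ a - b - c - |d|) :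
    (a - b - c - |d|) ^ 4 ≤
      (a + b + c + d) * (a + b - c - d) * ((a - b + c - d) * (a - b - c + d)) := by
  have hd := le_abs_self d
  have hd' := neg_abs_le d
  have hmul {u v : ℝ} (hu : a - b - c - |d| ≤ u) (hv : a - b - c - |d| ≤ v) :
      (a - b - c - |d|) ^ 2 ≤ u * v := by
    rw [sq]
    exact mul_le_mul hu hv h (h.trans hu)
  calc (a - b - c - |d|) ^ 4
      = (a - b - c - |d|) ^ 2 * (a - b - c - |d|) ^ 2 := by ring
    _ ≤ (a + b + c + d) * (a + b - c - d) * ((a - b + c - d) * (a - b - c + d)) := by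
        have hleft := hmul (u := a + b + c + d) (v := a + b - c - d) (by linarith) (by linarith)
        have hright := hmul (u := a - b + c - d) (v := a - b - c + d) (by linarith) (by linarith)
        exact mul_le_mul hleft hright (sq_nonneg _) ((sq_nonneg _).trans hleft)

theorem stmt12_general (ρ : Matrix (Fin 2 × Fin 2) (Fin 2 × Fin 2) ℂ) (hρ : ρ.IsHermitian)
    (lam : Fin 4 → ℝ) (h1 : 0 ≤ lam 1) (h2 : 0 ≤ lam 2) (h3 : 0 ≤ lam 3)
    (hchar : (ρ * spinFlip ρ).charpoly = ∏ i : Fin 4, (X - C ((lam i : ℂ) ^ 2))) :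
    lam 0 - lam 1 - lam 2 - lam 3 ≤ |(Theta ρ).det| ^ ((1 : ℝ) / 4) := by
  obtain ⟨d, hd, hdet⟩ := exists_det_Theta_eq_mul hρ hchar
  rw [← abs_of_nonneg h3, ← hd, hdet, abs_neg]
  rcases le_total (lam 0 - lam 1 - lam 2 - |d|) 0 with hneg | hpos
  · exact hneg.trans (by positivity)
  · rw [one_div, Real.le_rpow_inv_iff_of_pos hpos (abs_nonneg _) (by norm_num)]
    exact_mod_cast (pow_four_le_mul_mul h1 h2 hpos).trans (le_abs_self _)

/-- Concurrence is bounded by obesity: `C(ρ) ≤ |det Θ(ρ)|^{1/4}` for any two-qubit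
state `ρ`, where the λᵢ are the square roots of the eigenvalues of `ρρ̂` in
non-increasing order. -/
theorem stmt12 (ρ : Matrix (Fin 2 × Fin 2) (Fin 2 × Fin 2) ℂ)
    (hpsd : ρ.PosSemidef) (htr : ρ.trace = 1)
    (lam : Fin 4 → ℝ)
    (h01 : lam 1 ≤ lam 0) (h12 : lam 2 ≤ lam 1) (h23 : lam 3 ≤ lam 2) (h3 : 0 ≤ lam 3)
    (hchar : (ρ * spinFlip ρ).charpoly = ∏ i : Fin 4, (X - C ((lam i : ℂ) ^ 2))) :
    lam 0 - lam 1 - lam 2 - lam 3 ≤ |(Theta ρ).det| ^ ((1 : ℝ) / 4) :=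
  stmt12_general ρ hpsd.isHermitian lam (h3.trans (h23.trans h12)) (h3.trans h23) h3 hchar
end
end
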